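/- (Bourgain–Brezis–Mironescu) Let N ≥ 1, 1 < p < ∞, and let u ∈ W^{1,p}(ℝ^N), i.e. u ∈ L^p(ℝ^N) with weak gradient ∇u ∈ L^p(ℝ^N; ℝ^N). Then lim_{s→1⁻} (1−s) ∫_{ℝ^N} ∫_{ℝ^N} |u(x)−u(y)|^p / |x−y|^{N+sp} dy dx = (K_{N,p}/p) ∫_{ℝ^N} |∇u(x)|^p dx. -/

import Mathlib

/-!
Write `D(h) = ∫ |u(x + h) - u(x)| ^ p dx`. Translation, Tonelli and polar coordinates turn the
double integral into `∫_0^∞ (∫_S D(r w) dσ(w)) r ^ (-1 - s p) dr` (`energy_eq`).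

Testing against smooth functions gives `u(x + t v) - u(x) = ∫_0^t ⟪V(x + τ v), v⟫ dτ` for almost
every `x` (`weak_ftc`). With Jensen's inequality and the continuity of translations in `L^p` this
yields `D(t v) ≤ t ^ p ∫ |⟪V, v⟫| ^ p` and `D(t v) / t ^ p → ∫ |⟪V, v⟫| ^ p` as `t → 0⁺`
(`diff_quot`). By dominated convergence on the sphere, `r ^ (-p) ∫_S D(r w) dσ(w)` tends to
`∫_S ∫ |⟪V(x), w⟫| ^ p dx dσ(w) = K_{N,p} ∫ |V| ^ p`; the last equality is the rotation invariance
of the surface measure (`lintegral_sphere_inner`).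

It remains that the measures `a r ^ (a - 1) dr`, with `a = p (1 - s) → 0⁺`, concentrate unit mass
at `r = 0` against functions that are bounded and `O(r ^ (-p))` at infinity (`tendsto_radial`).
-/

open MeasureTheory Metric Filter Set
open scoped ENNReal RealInnerProductSpace Topology NNReal

noncomputable section

/-- Euclidean space `ℝ^N`. -/
abbrev Euc (N : ℕ) := EuclideanSpace ℝ (Fin N)

/-- `G : [0,∞) → [0,∞)` is an Orlicz function: continuous, convex, increasing,
`G 0 = 0`, superlinear at `0`, and satisfying the Δ₂ condition. -/
def IsOrlicz (G : ℝ → ℝ) : Prop :=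
  (∀ t, 0 ≤ t → 0 ≤ G t) ∧
  ContinuousOn G (Set.Ici 0) ∧
  ConvexOn ℝ (Set.Ici 0) G ∧
  StrictMonoOn G (Set.Ici 0) ∧
  G 0 = 0 ∧
  Tendsto (fun t => G t / t) (𝓝[>] (0:ℝ)) (𝓝 0) ∧
  ∃ c > 2, ∀ t ≥ (0:ℝ), G (2 * t) ≤ c * G t

/-- `f` is regularly varying at `0` (from the right) with index `ρ`. -/
def RegVaryAtZero (f : ℝ → ℝ) (ρ : ℝ) : Prop :=
  ∀ lam > (0:ℝ), Tendsto (fun t => f (lam * t) / f t) (𝓝[>] (0:ℝ)) (𝓝 (lam ^ ρ))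

/-- Hypotheses (H): `G` is a (piecewise) smooth Orlicz function, regularly varying at `0`
of index `p`, its derivative is regularly varying at `0` of index `p - 1`, and
`ℓ(t) = G(t)/t^p` is bounded below by a positive constant. -/
def HypH (G : ℝ → ℝ) (p : ℝ) : Prop :=
  IsOrlicz G ∧ RegVaryAtZero G p ∧
  (∃ g : ℝ → ℝ, (∀ t > (0:ℝ), HasDerivAt G (g t) t) ∧ RegVaryAtZero g (p - 1)) ∧
  ∃ c > (0:ℝ), ∀ t > (0:ℝ), c ≤ G t / t ^ p

/-- The modular `Φ_G(u) = ∫_{ℝ^N} G(|u|) dx`. -/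
def PhiG (N : ℕ) (G : ℝ → ℝ) (u : Euc N → ℝ) : ℝ≥0∞ :=
  ∫⁻ x, ENNReal.ofReal (G |u x|)

/-- The truncated nonlocal energy
`Ψ_{s,G,δ}(u) = ∫_{ℝ^N} ∫_{B(x,δ)} G(|u(x)-u(y)|/|x-y|^s) |x-y|^{-N} dy dx`. -/
def PsiG (N : ℕ) (s δ : ℝ) (G : ℝ → ℝ) (u : Euc N → ℝ) : ℝ≥0∞ :=
  ∫⁻ x, ∫⁻ y in ball x δ,
    ENNReal.ofReal (G (|u x - u y| / ‖x - y‖ ^ s) / ‖x - y‖ ^ (N : ℝ))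

/-- `V` is the weak gradient of `u`:
`∫ u ∂φ/∂xᵢ = -∫ Vᵢ φ` for every test function `φ ∈ C_c^∞` and every `i`. -/
def HasWeakGradient (N : ℕ) (u : Euc N → ℝ) (V : Euc N → Euc N) : Prop :=
  LocallyIntegrable u volume ∧ LocallyIntegrable V volume ∧
  ∀ φ : Euc N → ℝ, ContDiff ℝ (⊤ : ℕ∞) φ → HasCompactSupport φ → ∀ i : Fin N,
    ∫ x, u x * fderiv ℝ φ x (EuclideanSpace.single i 1) = -∫ x, V x i * φ x

/-- `K_{N,p} = ∫_{𝕊^{N-1}} |w·e|^p dσ(w)`, where `σ` is the surface measure on the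
unit sphere of `ℝ^N`. -/
def sphereK (N : ℕ) (p : ℝ) (e : Euc N) : ℝ :=
  ∫ w : sphere (0 : Euc N) 1, |(⟪(w : Euc N), e⟫)| ^ p
    ∂((volume : Measure (Euc N)).toSphere)

/-- Surface area of the unit sphere `𝕊^{N-1} ⊂ ℝ^N`. -/
def sphereArea (N : ℕ) : ℝ :=
  (((volume : Measure (Euc N)).toSphere) Set.univ).toReal

end

/-! ### Polar coordinates and the constant `K_{N,p}` -/

/-- Integration in polar coordinates, for non-negative functions. -/
lemma lintegral_polar (N : ℕ) (hN : 1 ≤ N) (f : Euc N → ℝ≥0∞) (hf : Measurable f) :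
    ∫⁻ x, f x = ∫⁻ w : sphere (0 : Euc N) 1, ∫⁻ r in Ioi (0 : ℝ),
      f (r • (w : Euc N)) * ENNReal.ofReal (r ^ (N - 1))
      ∂volume ∂((volume : Measure (Euc N)).toSphere) := by
  have : Nonempty (Fin N) := ⟨⟨0, hN⟩⟩
  have h1 : ∫⁻ x, f x = ∫⁻ x : ({0}ᶜ : Set (Euc N)), f (x : Euc N) ∂(Measure.comap Subtype.val volume) := by
    rw [lintegral_subtype_comap (measurableSet_singleton _).compl, restrict_compl_singleton]
  have h2 := (volume : Measure (Euc N)).measurePreserving_homeomorphUnitSphereProd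
  have h3 : ∀ x : ({0}ᶜ : Set (Euc N)), f (x : Euc N) =
      (fun q : sphere (0 : Euc N) 1 × Ioi (0 : ℝ) => f (q.2.1 • (q.1 : Euc N)))
        (homeomorphUnitSphereProd (Euc N) x) := by
    intro x
    have hx : ‖(x : Euc N)‖ ≠ 0 := norm_ne_zero_iff.2 x.2
    simp [smul_smul, hx]
  have hm : Measurable
      (fun q : sphere (0 : Euc N) 1 × Ioi (0 : ℝ) => f (q.2.1 • (q.1 : Euc N))) := by
    apply hf.comp
    fun_prop
  rw [h1, lintegral_congr h3, h2.lintegral_comp hm, lintegral_prod _ hm.aemeasurable]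
  refine lintegral_congr fun w => ?_
  have hm2 : Measurable (fun r : ℝ => f (r • (w : Euc N))) := by
    apply hf.comp
    fun_prop
  rw [Measure.volumeIoiPow, lintegral_withDensity_eq_lintegral_mul₀ (by fun_prop)]
  · simp only [Pi.mul_apply, finrank_euclideanSpace, Fintype.card_fin]
    rw [lintegral_subtype_comap measurableSet_Ioi
      (fun r : ℝ => ENNReal.ofReal (r ^ (N - 1)) * f (r • (w : Euc N)))]
    simp_rw [mul_comm]
  · exact (hm2.comp measurable_subtype_coe).aemeasurable

/-- Invariance of the surface measure under isometries, integrated against `|⟪·, v⟫| ^ p`: the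
corresponding integral over the unit ball is invariant, and equals the one over the sphere up to
a finite positive factor. -/
lemma lintegral_sphere_inner (N : ℕ) (hN : 1 ≤ N) (p : ℝ) (hp : 1 < p) (e v : Euc N)
    (he : ‖e‖ = 1) :
    ∫⁻ w : sphere (0 : Euc N) 1, ‖(⟪v, (w : Euc N)⟫ : ℝ)‖ₑ ^ p
        ∂((volume : Measure (Euc N)).toSphere) =
      ‖v‖ₑ ^ p * ENNReal.ofReal (sphereK N p e) := by
  have hp0 : 0 < p := by linarith
  have hK : ENNReal.ofReal (sphereK N p e) = ∫⁻ w : sphere (0 : Euc N) 1,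
      ‖(⟪e, (w : Euc N)⟫ : ℝ)‖ₑ ^ p ∂((volume : Measure (Euc N)).toSphere) := by
    unfold sphereK
    rw [ofReal_integral_eq_lintegral_ofReal]
    · refine lintegral_congr fun w => ?_
      rw [← ENNReal.ofReal_rpow_of_nonneg (abs_nonneg _) hp0.le, real_inner_comm,
        Real.enorm_eq_ofReal_abs]
    · have hc : Continuous (fun w : sphere (0 : Euc N) 1 => |(⟪(w : Euc N), e⟫ : ℝ)| ^ p) := by
        apply Continuous.rpow_const
        · fun_prop
        · intro _; right; exact hp0.le
      exact (hc.integrable_of_hasCompactSupport (HasCompactSupport.of_compactSpace _))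
    · exact Filter.Eventually.of_forall fun w => by positivity
  set S : Euc N → ℝ≥0∞ := fun a => ∫⁻ w : sphere (0 : Euc N) 1, ‖(⟪a, (w : Euc N)⟫ : ℝ)‖ₑ ^ p
        ∂((volume : Measure (Euc N)).toSphere) with hS
  set c : ℝ≥0∞ := ∫⁻ r in Ioo (0 : ℝ) 1, ENNReal.ofReal (r ^ p * r ^ (N - 1)) with hc
  have hball : ∀ a : Euc N, ∫⁻ x in ball (0 : Euc N) 1, ‖(⟪a, x⟫ : ℝ)‖ₑ ^ p = S a * c := by
    intro a
    rw [← lintegral_indicator measurableSet_ball, lintegral_polar N hN]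
    · rw [hS, ← lintegral_mul_const]
      · refine lintegral_congr fun w => ?_
        rw [hc, ← lintegral_const_mul]
        · rw [← lintegral_indicator measurableSet_Ioi, ← lintegral_indicator measurableSet_Ioo]
          refine lintegral_congr fun r => ?_
          by_cases hr : 0 < r
          · by_cases hr1 : r < 1
            · have h1 : r • (w : Euc N) ∈ ball (0 : Euc N) 1 := by
                simp [norm_smul, abs_of_pos hr, hr1]
              rw [indicator_of_mem (show r ∈ Ioi (0:ℝ) from hr), indicator_of_mem h1,
                indicator_of_mem (show r ∈ Ioo (0:ℝ) 1 from ⟨hr, hr1⟩), inner_smul_right,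
                enorm_mul, ENNReal.mul_rpow_of_nonneg _ _ hp0.le, Real.enorm_eq_ofReal hr.le,
                ENNReal.ofReal_rpow_of_nonneg hr.le hp0.le, ENNReal.ofReal_mul (by positivity)]
              ring
            · have h1 : r • (w : Euc N) ∉ ball (0 : Euc N) 1 := by
                simpa [norm_smul, abs_of_pos hr] using hr1
              rw [indicator_of_mem (show r ∈ Ioi (0:ℝ) from hr), indicator_of_notMem h1,
                indicator_of_notMem (fun h => hr1 h.2), zero_mul]
          · rw [indicator_of_notMem (show r ∉ Ioi (0:ℝ) from hr),
              indicator_of_notMem (fun h => hr h.1)]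
        · fun_prop
      · fun_prop
    · exact Measurable.indicator (by fun_prop) measurableSet_ball
  have hc0 : c ≠ 0 := by
    rw [hc, Ne, setLIntegral_eq_zero_iff measurableSet_Ioo (by fun_prop)]
    intro h
    have h2 : ∀ᵐ x : ℝ, x ∉ Ioo (0:ℝ) 1 := by
      filter_upwards [h] with x hx hx1
      have := hx hx1
      have hx0 := hx1.1
      rw [ENNReal.ofReal_eq_zero] at this
      have : 0 < x ^ p * x ^ (N - 1) := by positivity
      linarith
    have h3 : volume (Ioo (0:ℝ) 1) = 0 := by
      rw [measure_eq_zero_iff_ae_notMem]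
      exact h2
    simp at h3
  have hct : c ≠ ⊤ := by
    have : c ≤ ∫⁻ r in Ioo (0 : ℝ) 1, 1 := by
      refine setLIntegral_mono' measurableSet_Ioo fun r hr => ?_
      rw [ENNReal.ofReal_le_one]
      exact mul_le_one₀ (Real.rpow_le_one hr.1.le hr.2.le hp0.le) (by have := hr.1; positivity)
        (pow_le_one₀ hr.1.le hr.2.le)
    refine ne_top_of_le_ne_top ?_ this
    simp
  have hrot : ∀ a b : Euc N, ‖a‖ = ‖b‖ → S a = S b := by
    intro a b hab
    -- Reflection in the bisecting hyperplane exchanges `a` and `b`.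
    let L := Submodule.reflection (Submodule.span ℝ {a - b})ᗮ
    have hL : L a = b := Submodule.reflection_sub hab
    have hmp := L.measurePreserving
    have h1 : ∫⁻ x in ball (0 : Euc N) 1, ‖(⟪b, x⟫ : ℝ)‖ₑ ^ p =
        ∫⁻ x in ball (0 : Euc N) 1, ‖(⟪a, x⟫ : ℝ)‖ₑ ^ p := by
      rw [← hmp.setLIntegral_comp_preimage measurableSet_ball (by fun_prop)]
      have : L ⁻¹' ball (0 : Euc N) 1 = ball 0 1 := by
        ext x; simp
      rw [this, ← hL]
      simp_rw [LinearIsometryEquiv.inner_map_map]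
    rw [hball, hball] at h1
    exact ((ENNReal.mul_left_inj hc0 hct).1 h1).symm
  have hhom : S v = ‖v‖ₑ ^ p * S e := by
    rw [hrot v (‖v‖ • e) (by simp [norm_smul, he]), hS, ← lintegral_const_mul]
    · refine lintegral_congr fun w => ?_
      simp [real_inner_smul_left, enorm_mul, ENNReal.mul_rpow_of_nonneg _ _ hp0.le]
    · fun_prop
  rw [hK]
  exact hhom

/-! ### Radial concentration -/

/-- One-dimensional concentration: `a r ^ (a - 1) dr` concentrates at `0` as `a → 0⁺`.  The
substitution `y = r ^ a` turns the integral into `∫ g (y ^ (1 / a)) dy`, where dominated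
convergence applies: the integrand tends to `L` for `y < 1` and to `0` for `y > 1`. -/
lemma tendsto_radial (p : ℝ) (hp : 1 < p) (g : ℝ → ℝ≥0∞) (hg : Measurable g) (C L : ℝ≥0∞)
    (hC : C ≠ ⊤) (h1 : ∀ r, 0 < r → g r ≤ C)
    (h2 : ∀ r, 0 < r → g r ≤ C * ENNReal.ofReal (r ^ (-p)))
    (hL : Tendsto g (𝓝[>] 0) (𝓝 L)) :
    Tendsto (fun a : ℝ => ENNReal.ofReal a *
      ∫⁻ r in Ioi (0:ℝ), g r * ENNReal.ofReal (r ^ (a - 1))) (𝓝[>] 0) (𝓝 L) := by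
  have hp0 : 0 < p := by linarith
  have key : ∀ a : ℝ, 0 < a → ENNReal.ofReal a *
      ∫⁻ r in Ioi (0:ℝ), g r * ENNReal.ofReal (r ^ (a - 1)) =
      ∫⁻ y in Ioi (0:ℝ), g (y ^ (1 / a)) := by
    intro a ha
    have him : (fun r : ℝ => r ^ a) '' Ioi 0 = Ioi 0 := by
      ext y
      constructor
      · rintro ⟨r, hr, rfl⟩
        exact Real.rpow_pos_of_pos hr _
      · intro hy
        refine ⟨y ^ (1 / a), Real.rpow_pos_of_pos hy _, ?_⟩
        simp only
        rw [← Real.rpow_mul (le_of_lt hy), one_div_mul_cancel ha.ne', Real.rpow_one]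
    have hcv := lintegral_image_eq_lintegral_abs_deriv_mul (s := Ioi (0:ℝ))
      (f := fun r : ℝ => r ^ a) (f' := fun r => a * r ^ (a - 1)) measurableSet_Ioi
      (fun x hx => (Real.hasDerivAt_rpow_const (Or.inl (ne_of_gt hx))).hasDerivWithinAt)
      (fun x hx y hy hxy => by
        have hxy : x ^ a = y ^ a := hxy
        exact (Real.rpow_left_inj (le_of_lt hx) (le_of_lt hy) ha.ne').1 hxy)
      (fun y => g (y ^ (1 / a)))
    rw [him] at hcv
    rw [hcv, ← lintegral_const_mul' _ _ ENNReal.ofReal_ne_top]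
    refine setLIntegral_congr_fun measurableSet_Ioi fun r hr => ?_
    have hr0 : 0 < r := hr
    have : (r ^ a) ^ (1 / a) = r := by
      rw [← Real.rpow_mul hr0.le, mul_one_div_cancel ha.ne', Real.rpow_one]
    rw [this, abs_of_nonneg (by positivity), ENNReal.ofReal_mul ha.le]
    ring
  have hlim : ∫⁻ y in Ioi (0:ℝ), (Ioo (0:ℝ) 1).indicator (fun _ => L) y = L := by
    rw [lintegral_indicator measurableSet_Ioo, Measure.restrict_restrict measurableSet_Ioo,
      inter_eq_left.2 Ioo_subset_Ioi_self]
    simp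
  rw [← hlim]
  -- For `a ≤ p / 2` and `y > 1`, the decay of `g` gives `g (y ^ (1 / a)) ≤ C y ^ (-2)`.
  let B : ℝ → ℝ≥0∞ := fun y => C * ENNReal.ofReal ((1 + ‖y‖) ^ (-2 : ℝ)) * 4
  have hev : ∀ᶠ a : ℝ in 𝓝[>] 0, 0 < a ∧ a ≤ p / 2 := by
    filter_upwards [Ioo_mem_nhdsGT (show (0:ℝ) < p / 2 by positivity)] with a ha
    exact ⟨ha.1, ha.2.le⟩
  refine Tendsto.congr' (f₁ := fun a : ℝ => ∫⁻ y in Ioi (0:ℝ), g (y ^ (1 / a))) ?_ ?_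
  · filter_upwards [hev] with a ha
    exact (key a ha.1).symm
  refine tendsto_lintegral_filter_of_dominated_convergence B ?_ ?_ ?_ ?_
  · exact Filter.Eventually.of_forall fun a => by fun_prop
  · filter_upwards [hev] with a ha
    filter_upwards [ae_restrict_mem measurableSet_Ioi] with y hy
    have hy0 : 0 < y := hy
    have hya : 0 < y ^ (1 / a) := Real.rpow_pos_of_pos hy0 _
    have hB : B y = C * ENNReal.ofReal (4 * (1 + y) ^ (-2 : ℝ)) := by
      simp only [B]
      rw [mul_comm 4 (_ ^ _), ENNReal.ofReal_mul (by positivity), Real.norm_of_nonneg hy0.le]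
      rw [mul_assoc]; congr 2; norm_num
    rw [hB]
    have e2 : (1 + y) ^ (-2 : ℝ) = ((1 + y) ^ 2)⁻¹ := by
      rw [Real.rpow_neg (by positivity)]; norm_cast
    by_cases hy1 : y ≤ 1
    · refine (h1 _ hya).trans (le_mul_of_one_le_right (zero_le) ?_)
      rw [ENNReal.one_le_ofReal, e2, ← div_eq_mul_inv, le_div_iff₀ (by positivity)]
      nlinarith
    · push Not at hy1
      refine (h2 _ hya).trans ?_
      gcongr
      rw [← Real.rpow_mul hy0.le]
      calc y ^ (1 / a * -p) ≤ y ^ (-2 : ℝ) := by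
            apply Real.rpow_le_rpow_of_exponent_le hy1.le
            have : 2 ≤ 1 / a * p := by
              rw [one_div, inv_mul_eq_div, le_div_iff₀ ha.1]; linarith [ha.2]
            linarith
        _ ≤ 4 * (1 + y) ^ (-2 : ℝ) := by
            rw [e2, Real.rpow_neg hy0.le]
            norm_cast
            rw [← div_eq_mul_inv, inv_eq_one_div, div_le_div_iff₀ (by positivity) (by positivity)]
            nlinarith
  · refine ne_top_of_le_ne_top ?_ (setLIntegral_le_lintegral _ _)
    simp only [B]
    rw [lintegral_mul_const _ (by fun_prop), lintegral_const_mul _ (by fun_prop)]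
    refine ENNReal.mul_ne_top (ENNReal.mul_ne_top hC ?_) (by norm_num)
    exact (finite_integral_one_add_norm (by simp)).ne
  · have hne : ∀ᵐ y : ℝ, y ≠ 1 := by simp [ae_iff]
    filter_upwards [ae_restrict_mem measurableSet_Ioi, ae_restrict_of_ae hne] with y hy hy1
    have hy0 : 0 < y := hy
    have hinv : Tendsto (fun a : ℝ => 1 / a) (𝓝[>] 0) atTop := by
      simpa using tendsto_inv_nhdsGT_zero (𝕜 := ℝ)
    rcases lt_or_gt_of_ne hy1 with h | h
    · rw [indicator_of_mem (show y ∈ Ioo (0:ℝ) 1 from ⟨hy0, h⟩)]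
      refine hL.comp ?_
      rw [tendsto_nhdsWithin_iff]
      exact ⟨(tendsto_rpow_atTop_of_base_lt_one y (by linarith) h).comp hinv,
        Filter.Eventually.of_forall fun a => Real.rpow_pos_of_pos hy0 _⟩
    · rw [indicator_of_notMem (fun h' => absurd h'.2 (not_lt.2 h.le))]
      have ht : Tendsto (fun a : ℝ => C * ENNReal.ofReal ((y ^ (1 / a)) ^ (-p))) (𝓝[>] 0)
          (𝓝 0) := by
        have ha : Tendsto (fun a : ℝ => y ^ (1 / a)) (𝓝[>] 0) atTop :=
          (tendsto_rpow_atTop_of_base_gt_one y h).comp hinv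
        have hb := ENNReal.tendsto_ofReal ((tendsto_rpow_neg_atTop hp0).comp ha)
        have := ENNReal.Tendsto.const_mul (a := C) hb (Or.inr hC)
        simpa using this
      refine tendsto_of_tendsto_of_tendsto_of_le_of_le tendsto_const_nhds ht
        (fun _ => zero_le) (fun a => h2 _ (Real.rpow_pos_of_pos hy0 _))

/-! ### Translations in `L^p` -/

/-- Continuity of translations in `L^p`, along a line. -/
lemma tendsto_translate (N : ℕ) (p : ℝ) (hp : 1 < p) (f : Euc N → ℝ)
    (hf : MemLp f (ENNReal.ofReal p) volume) (v : Euc N) :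
    Tendsto (fun t : ℝ => eLpNorm (fun x => f (x + t • v) - f x) (ENNReal.ofReal p) volume)
      (𝓝 0) (𝓝 0) := by
  have : Fact (1 ≤ ENNReal.ofReal p) := ⟨by rw [ENNReal.one_le_ofReal]; exact hp.le⟩
  have : Fact (ENNReal.ofReal p ≠ ⊤) := ⟨ENNReal.ofReal_ne_top⟩
  let F := hf.toLp f
  have hc : Continuous (fun t : ℝ => (DomAddAct.mk (t • v) +ᵥ F : Lp ℝ (ENNReal.ofReal p)
      (volume : Measure (Euc N)))) := by
    have : Continuous (fun t : ℝ => DomAddAct.mk (t • v)) := by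
      exact DomAddAct.continuous_mk.comp (by fun_prop)
    exact this.vadd continuous_const
  have h0 := tendsto_iff_edist_tendsto_0.1 (hc.tendsto 0)
  refine h0.congr fun t => ?_
  rw [Lp.edist_def]
  refine eLpNorm_congr_ae ?_
  filter_upwards [DomAddAct.vadd_Lp_ae_eq (DomAddAct.mk (t • v)) F,
    DomAddAct.vadd_Lp_ae_eq (DomAddAct.mk ((0:ℝ) • v)) F, hf.coeFn_toLp,
    ((measurePreserving_add_left volume (t • v)).quasiMeasurePreserving.ae hf.coeFn_toLp),
    ((measurePreserving_add_left volume ((0:ℝ) • v)).quasiMeasurePreserving.ae hf.coeFn_toLp)]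
    with x h1 h2 h3 h4 h5
  simp only [Pi.sub_apply]
  rw [h1, h2]
  simp only [Equiv.symm_apply_apply, vadd_eq_add, F]
  rw [h4, h5, add_comm]
  simp

/-! ### The fundamental theorem of calculus along lines -/

/-- Joint integrability behind the exchanges of integrals: for bounded `τ` only a fixed ball of
`x` contributes. -/
lemma integrable_prod_translate (N : ℕ) (g : Euc N → ℝ) (hg : LocallyIntegrable g volume)
    (hgm : Measurable g) (ψ : Euc N → ℝ) (hψ : Measurable ψ) (C : ℝ) (hC : ∀ x, ‖ψ x‖ ≤ C)
    (R : ℝ) (hR : ∀ x, R < ‖x‖ → ψ x = 0) (v : Euc N) (t : ℝ) :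
    Integrable (fun q : ℝ × Euc N => g q.2 * ψ (q.2 - q.1 • v))
      ((volume.restrict (Ioc 0 t)).prod volume) := by
  have h1 : Integrable (fun q : ℝ × Euc N => (1 : ℝ) *
      (closedBall (0 : Euc N) (R + t * ‖v‖)).indicator (fun x => g x * C) q.2)
      ((volume.restrict (Ioc 0 t)).prod volume) := by
    refine Integrable.mul_prod (f := fun _ : ℝ => (1:ℝ)) (integrable_const _) ?_
    rw [integrable_indicator_iff measurableSet_closedBall]
    exact (hg.integrableOn_isCompact (isCompact_closedBall _ _)).mul_const C
  refine h1.mono ?_ ?_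
  · exact (by fun_prop : Measurable _).aestronglyMeasurable
  · have hτ : ∀ᵐ q : ℝ × Euc N ∂((volume.restrict (Ioc 0 t)).prod volume), q.1 ∈ Ioc 0 t :=
      Measure.quasiMeasurePreserving_fst.ae (ae_restrict_mem measurableSet_Ioc)
    filter_upwards [hτ] with q hq
    by_cases hx : q.2 ∈ closedBall (0 : Euc N) (R + t * ‖v‖)
    · rw [indicator_of_mem hx, one_mul, norm_mul, norm_mul]
      gcongr
      exact (hC _).trans (le_abs_self _)
    · have : ψ (q.2 - q.1 • v) = 0 := by
        apply hR
        rw [mem_closedBall_zero_iff, not_le] at hx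
        have h2 : ‖q.1 • v‖ ≤ t * ‖v‖ := by
          rw [norm_smul, Real.norm_of_nonneg hq.1.le]
          exact mul_le_mul_of_nonneg_right hq.2 (norm_nonneg _)
        have := norm_sub_norm_le q.2 (q.1 • v)
        linarith
      rw [this, mul_zero, norm_zero]
      exact norm_nonneg _

/-- The same integrand after the measure-preserving shear `(τ, x) ↦ (τ, x + τ v)`. -/
lemma integrable_prod_translate' (N : ℕ) (g : Euc N → ℝ) (hg : LocallyIntegrable g volume)
    (hgm : Measurable g) (ψ : Euc N → ℝ) (hψ : Measurable ψ) (C : ℝ) (hC : ∀ x, ‖ψ x‖ ≤ C)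
    (R : ℝ) (hR : ∀ x, R < ‖x‖ → ψ x = 0) (v : Euc N) (t : ℝ) :
    Integrable (fun q : ℝ × Euc N => g (q.2 + q.1 • v) * ψ q.2)
      ((volume.restrict (Ioc 0 t)).prod volume) := by
  have h := integrable_prod_translate N g hg hgm ψ hψ C hC R hR v t
  have hT : MeasurePreserving (fun q : ℝ × Euc N => (q.1, q.2 + q.1 • v))
      ((volume.restrict (Ioc 0 t)).prod volume) ((volume.restrict (Ioc 0 t)).prod volume) := by
    refine (MeasurePreserving.id _).skew_product (g := fun τ x => x + τ • v) (by fun_prop) ?_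
    exact ae_of_all _ fun τ => (measurePreserving_add_right volume (τ • v)).map_eq
  have h2 := hT.integrable_comp_of_integrable h
  refine h2.congr (ae_of_all _ fun q => ?_)
  simp

lemma exists_bound_radius (N : ℕ) (ψ : Euc N → ℝ) (hc : Continuous ψ) (hs : HasCompactSupport ψ) :
    ∃ C R : ℝ, (∀ x, ‖ψ x‖ ≤ C) ∧ ∀ x, R < ‖x‖ → ψ x = 0 := by
  obtain ⟨C, hC⟩ := hs.exists_bound_of_continuous hc
  obtain ⟨R, hR⟩ := hs.isCompact.isBounded.subset_closedBall (0 : Euc N)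
  refine ⟨C, R, hC, fun x hx => ?_⟩
  by_contra h
  have := hR (subset_tsupport ψ h)
  rw [mem_closedBall_zero_iff] at this
  linarith

/-- The weak gradient gives weak derivatives in all directions, not only the coordinate ones. -/
lemma weak_directional (N : ℕ) (u : Euc N → ℝ) (V : Euc N → Euc N) (hV : HasWeakGradient N u V)
    (φ : Euc N → ℝ) (hφ : ContDiff ℝ (⊤ : ℕ∞) φ) (hs : HasCompactSupport φ) (v : Euc N) :
    ∫ x, u x * fderiv ℝ φ x v = -∫ x, ⟪V x, v⟫ * φ x := by
  obtain ⟨hu, hVl, hw⟩ := hV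
  have hv : v = ∑ i, v i • EuclideanSpace.single i (1:ℝ) := by
    ext j
    simp [Finset.sum_apply, Pi.single_apply]
  have h1 : ∀ x, u x * fderiv ℝ φ x v =
      ∑ i, v i * (u x * fderiv ℝ φ x (EuclideanSpace.single i 1)) := by
    intro x
    conv_lhs => rw [hv]
    rw [map_sum, Finset.mul_sum]
    refine Finset.sum_congr rfl fun i _ => ?_
    rw [map_smul, smul_eq_mul]; ring
  have h2 : ∀ x, (⟪V x, v⟫ : ℝ) * φ x = ∑ i, v i * (V x i * φ x) := by
    intro x
    rw [PiLp.inner_apply, Finset.sum_mul]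
    refine Finset.sum_congr rfl fun i _ => ?_
    simp; ring
  have hi1 : ∀ i : Fin N, Integrable
      (fun x => u x * fderiv ℝ φ x (EuclideanSpace.single i 1)) volume := by
    intro i
    have hc : Continuous (fun x => fderiv ℝ φ x (EuclideanSpace.single i (1:ℝ))) :=
      (hφ.continuous_fderiv (by simp)).clm_apply continuous_const
    have hcs : HasCompactSupport (fun x => fderiv ℝ φ x (EuclideanSpace.single i (1:ℝ))) :=
      hs.fderiv_apply ℝ _
    exact hu.integrable_smul_right_of_hasCompactSupport hc hcs
  have hi2 : ∀ i : Fin N, Integrable (fun x => V x i * φ x) volume := by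
    intro i
    have := hVl.integrable_smul_left_of_hasCompactSupport hφ.continuous hs
    have := (EuclideanSpace.proj (𝕜 := ℝ) i).integrable_comp this
    refine this.congr (ae_of_all _ fun x => ?_)
    simp [mul_comm]
  simp_rw [h1, h2]
  rw [integral_finsetSum _ fun i _ => (hi1 i).const_mul _,
    integral_finsetSum _ fun i _ => (hi2 i).const_mul _, ← Finset.sum_neg_distrib]
  refine Finset.sum_congr rfl fun i _ => ?_
  rw [integral_const_mul, integral_const_mul, hw φ hφ hs i]; ring

/-- The fundamental theorem of calculus along lines for Sobolev functions, proved by testing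
against smooth compactly supported functions and exchanging the order of integration. -/
lemma weak_ftc (N : ℕ) (u : Euc N → ℝ) (hum : Measurable u) (V : Euc N → Euc N)
    (hVm : Measurable V) (hV : HasWeakGradient N u V) (v : Euc N) (t : ℝ) (ht : 0 < t) :
    ∀ᵐ x, IntegrableOn (fun τ : ℝ => (⟪V (x + τ • v), v⟫ : ℝ)) (Ioc 0 t) ∧
      u (x + t • v) - u x = ∫ τ in Ioc 0 t, (⟪V (x + τ • v), v⟫ : ℝ) := by
  have hu := hV.1
  set f : Euc N → ℝ := fun x => ⟪V x, v⟫ with hf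
  have hfm : Measurable f := by fun_prop
  have hfl : LocallyIntegrable f volume := by
    intro x
    obtain ⟨s, hs, hi⟩ := hV.2.1 x
    exact ⟨s, hs, hi.inner_const v⟩
  have hind : ∀ n : ℕ, Integrable (fun q : ℝ × Euc N => f (q.2 + q.1 • v) *
      (closedBall (0 : Euc N) n).indicator (fun _ => (1:ℝ)) q.2)
      ((volume.restrict (Ioc 0 t)).prod volume) := by
    intro n
    refine integrable_prod_translate' N f hfl hfm _
      (measurable_const.indicator measurableSet_closedBall) 1 ?_ n ?_ v t
    · intro x
      by_cases hx : x ∈ closedBall (0 : Euc N) n <;> simp [indicator, hx]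
    · intro x hx
      rw [indicator_of_notMem]
      simpa using hx
  refine Filter.Eventually.and ?_ ?_
  · have h1 : ∀ n : ℕ, ∀ᵐ x : Euc N, Integrable (fun τ : ℝ => f (x + τ • v) *
      (closedBall (0 : Euc N) n).indicator (fun _ => (1:ℝ)) x) (volume.restrict (Ioc 0 t)) :=
      fun n => (hind n).prod_left_ae
    filter_upwards [ae_all_iff.2 h1] with x hx
    obtain ⟨n, hn⟩ := exists_nat_ge ‖x‖
    have := hx n
    rw [indicator_of_mem (by simpa using hn)] at this
    simp only [mul_one] at this
    exact this
  refine ae_eq_of_integral_contDiff_smul_eq (f := fun x => u (x + t • v) - u x)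
    (f' := fun x => ∫ τ in Ioc 0 t, f (x + τ • v)) ?_ ?_ ?_
  · refine LocallyIntegrable.sub ?_ hu
    rw [locallyIntegrable_iff]
    intro K hK
    have := (measurePreserving_add_right (volume : Measure (Euc N)) (t • v))
    have hK2 : IsCompact ((fun x => x + t • v) '' K) := hK.image (by fun_prop)
    have h3 := (this.integrableOn_comp_preimage
      (Homeomorph.addRight (t • v)).measurableEmbedding).2 (hu.integrableOn_isCompact hK2)
    exact h3.mono_set (subset_preimage_image _ _)
  · rw [locallyIntegrable_iff]
    intro K hK
    obtain ⟨R, hR⟩ := hK.isBounded.subset_closedBall (0 : Euc N)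
    obtain ⟨n, hn⟩ := exists_nat_ge R
    have h3 := (hind n).integral_prod_right
    have h4 : IntegrableOn (fun x => ∫ τ in Ioc 0 t, f (x + τ • v)) (closedBall (0 : Euc N) n)
        volume := by
      rw [← integrable_indicator_iff measurableSet_closedBall]
      refine h3.congr (ae_of_all _ fun x => ?_)
      by_cases hx : x ∈ closedBall (0 : Euc N) n
      · simp only [indicator_of_mem hx, mul_one]
      · simp only [indicator_of_notMem hx, mul_zero, integral_zero]
    exact h4.mono_set (hR.trans (closedBall_subset_closedBall hn))
  · intro φ hφ hs
    have hφd : Differentiable ℝ φ := hφ.differentiable (by simp)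
    set ψ : Euc N → ℝ := fun x => fderiv ℝ φ x v with hψ
    have hψc : Continuous ψ := (hφ.continuous_fderiv (by simp)).clm_apply continuous_const
    have hψs : HasCompactSupport ψ := hs.fderiv_apply ℝ _
    have htr : ∀ τ : ℝ, ContDiff ℝ (⊤ : ℕ∞) (fun x => φ (x - τ • v)) := fun τ =>
      hφ.comp (contDiff_id.sub contDiff_const)
    have htrs : ∀ τ : ℝ, HasCompactSupport (fun x => φ (x - τ • v)) := fun τ => by
      have := hs.comp_homeomorph (Homeomorph.subRight (τ • v))
      exact this
    have hder : ∀ (τ : ℝ) (x : Euc N), fderiv ℝ (fun x => φ (x - τ • v)) x v = ψ (x - τ • v) := by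
      intro τ x
      simp only [sub_eq_add_neg]
      rw [fderiv_comp_add_right]
    obtain ⟨C, R, hC, hR⟩ := exists_bound_radius N φ hφ.continuous hs
    obtain ⟨C', R', hC', hR'⟩ := exists_bound_radius N ψ hψc hψs
    have huφ : ∀ τ : ℝ, Integrable (fun x => u x * φ (x - τ • v)) volume := fun τ =>
      hu.integrable_smul_right_of_hasCompactSupport (htr τ).continuous (htrs τ)
    have hFTC : ∀ x, φ (x - t • v) - φ x = -∫ τ in Ioc 0 t, ψ (x - τ • v) := by
      intro x
      have hd : ∀ τ ∈ uIcc 0 t, HasDerivAt (fun τ : ℝ => φ (x - τ • v)) (-ψ (x - τ • v)) τ := by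
        intro τ _
        have h5 : HasDerivAt (fun τ : ℝ => x - τ • v) (-v) τ := by
          simpa using ((hasDerivAt_id τ).smul_const v).const_sub x
        have := (hφd (x - τ • v)).hasFDerivAt.comp_hasDerivAt τ h5
        rw [map_neg] at this
        exact this
      have hcont : Continuous (fun τ : ℝ => -ψ (x - τ • v)) :=
        (hψc.comp (by fun_prop)).neg
      have := intervalIntegral.integral_eq_sub_of_hasDerivAt hd (hcont.intervalIntegrable _ _)
      rw [intervalIntegral.integral_of_le ht.le, integral_neg] at this
      rw [this]; simp
    have hI1 := integrable_prod_translate N u hu hum ψ hψc.measurable C' hC' R' hR' v t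
    have hI2 := integrable_prod_translate' N f hfl hfm φ hφ.continuous.measurable C hC R hR v t
    have hshift : ∀ (g : Euc N → ℝ) (τ : ℝ), ∫ x, g (x + τ • v) * φ x =
        ∫ x, g x * φ (x - τ • v) := by
      intro g τ
      rw [← integral_add_right_eq_self (fun x => g x * φ (x - τ • v)) (τ • v)]
      simp
    have huφ' : Integrable (fun x => u (x + t • v) * φ x) volume := by
      have := (huφ t).comp_add_right (t • v)
      simpa using this
    have huφ0 : Integrable (fun x => u x * φ x) volume := by simpa using huφ 0
    calc ∫ x, φ x • (u (x + t • v) - u x)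
        = ∫ x, (u (x + t • v) * φ x - u x * φ x) := by
          refine integral_congr_ae (ae_of_all _ fun x => ?_)
          simp only [smul_eq_mul]; ring
      _ = ∫ x, (u x * φ (x - t • v) - u x * φ x) := by
          rw [integral_sub huφ' huφ0, hshift u t, ← integral_sub (huφ t) huφ0]
      _ = -∫ x, ∫ τ in Ioc 0 t, u x * ψ (x - τ • v) := by
          rw [← integral_neg]
          refine integral_congr_ae (ae_of_all _ fun x => ?_)
          simp only
          rw [← mul_sub, hFTC, integral_const_mul, mul_neg]
      _ = -∫ τ in Ioc 0 t, ∫ x, u x * ψ (x - τ • v) := by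
          rw [integral_integral_swap]
          exact hI1.swap
      _ = ∫ τ in Ioc 0 t, ∫ x, f (x + τ • v) * φ x := by
          rw [← integral_neg]
          refine integral_congr_ae (ae_of_all _ fun τ => ?_)
          simp only
          have := weak_directional N u V hV _ (htr τ) (htrs τ) v
          simp_rw [hder] at this
          rw [this, neg_neg, hshift f τ]
      _ = ∫ x, ∫ τ in Ioc 0 t, f (x + τ • v) * φ x := by
          rw [integral_integral_swap]
          exact hI2
      _ = ∫ x, φ x • ∫ τ in Ioc 0 t, f (x + τ • v) := by
          refine integral_congr_ae (ae_of_all _ fun x => ?_)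
          simp only
          rw [integral_mul_const, smul_eq_mul, mul_comm]

/-! ### Difference quotients -/

lemma eLpNorm_rpow_eq (N : ℕ) (p : ℝ) (hp : 1 < p) (g : Euc N → ℝ) :
    eLpNorm g (ENNReal.ofReal p) volume ^ p = ∫⁻ x, ‖g x‖ₑ ^ p := by
  have hp0 : 0 < p := by linarith
  rw [eLpNorm_eq_lintegral_rpow_enorm_toReal (by simpa using hp0) ENNReal.ofReal_ne_top,
    ENNReal.toReal_ofReal hp0.le, ← ENNReal.rpow_mul, one_div_mul_cancel hp0.ne', ENNReal.rpow_one]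

/-- Jensen's inequality on `(0, t]`, integrated in a parameter (a form of Minkowski's integral
inequality). -/
lemma lintegral_enorm_integral_rpow_le (N : ℕ) (p : ℝ) (hp : 1 < p) (t : ℝ) (ht : 0 < t)
    (g : Euc N → ℝ → ℝ) (hg : Measurable (Function.uncurry g)) (M : ℝ≥0∞)
    (hM : ∀ τ ∈ Ioc 0 t, ∫⁻ x, ‖g x τ‖ₑ ^ p ≤ M) :
    ∫⁻ x, ‖∫ τ in Ioc 0 t, g x τ‖ₑ ^ p ≤ ENNReal.ofReal t ^ p * M := by
  have hp0 : 0 < p := by linarith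
  have ht0 : ENNReal.ofReal t ≠ 0 := by simpa using ht
  have hJ : ∀ x, ‖∫ τ in Ioc 0 t, g x τ‖ₑ ^ p ≤
      ENNReal.ofReal t ^ (p - 1) * ∫⁻ τ in Ioc 0 t, ‖g x τ‖ₑ ^ p := by
    intro x
    have hgx : Measurable (g x) := hg.comp measurable_prodMk_left
    have h1 := eLpNorm'_le_eLpNorm'_mul_rpow_measure_univ (μ := volume.restrict (Ioc 0 t))
      one_pos hp.le hgx.aestronglyMeasurable
    calc ‖∫ τ in Ioc 0 t, g x τ‖ₑ ^ p ≤ (∫⁻ τ in Ioc 0 t, ‖g x τ‖ₑ) ^ p := by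
          gcongr
          exact enorm_integral_le_lintegral_enorm _
      _ = (eLpNorm' (g x) 1 (volume.restrict (Ioc 0 t))) ^ p := by
          simp [eLpNorm']
      _ ≤ (eLpNorm' (g x) p (volume.restrict (Ioc 0 t)) *
            (volume.restrict (Ioc 0 t)) Set.univ ^ (1 / 1 - 1 / p)) ^ p := by
          gcongr
      _ = ENNReal.ofReal t ^ (p - 1) * ∫⁻ τ in Ioc 0 t, ‖g x τ‖ₑ ^ p := by
          rw [ENNReal.mul_rpow_of_nonneg _ _ hp0.le, ← lintegral_rpow_enorm_eq_rpow_eLpNorm' hp0,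
            mul_comm, ← ENNReal.rpow_mul]
          congr 2
          · simp
          · field_simp
  calc ∫⁻ x, ‖∫ τ in Ioc 0 t, g x τ‖ₑ ^ p
      ≤ ∫⁻ x, ENNReal.ofReal t ^ (p - 1) * ∫⁻ τ in Ioc 0 t, ‖g x τ‖ₑ ^ p := lintegral_mono hJ
    _ = ENNReal.ofReal t ^ (p - 1) * ∫⁻ x, ∫⁻ τ in Ioc 0 t, ‖g x τ‖ₑ ^ p := by
        refine lintegral_const_mul' _ _ ?_
        exact ENNReal.rpow_ne_top_of_nonneg (by linarith) ENNReal.ofReal_ne_top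
    _ = ENNReal.ofReal t ^ (p - 1) * ∫⁻ τ in Ioc 0 t, ∫⁻ x, ‖g x τ‖ₑ ^ p := by
        rw [lintegral_lintegral_swap]
        exact (hg.enorm.pow_const p).aemeasurable
    _ ≤ ENNReal.ofReal t ^ (p - 1) * ∫⁻ τ in Ioc 0 t, M := by
        gcongr 1
        exact setLIntegral_mono' measurableSet_Ioc hM
    _ = ENNReal.ofReal t ^ p * M := by
        rw [setLIntegral_const, Real.volume_Ioc, sub_zero, mul_comm M, ← mul_assoc]
        congr 1
        conv_lhs => rw [← ENNReal.rpow_one (ENNReal.ofReal t), ← ENNReal.rpow_mul,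
          ← ENNReal.rpow_add _ _ ht0 ENNReal.ofReal_ne_top]
        simp

lemma enorm_inner_le_mul {N : ℕ} (a b : Euc N) : ‖(⟪a, b⟫ : ℝ)‖ₑ ≤ ‖a‖ₑ * ‖b‖ₑ := by
  rw [← ofReal_norm, ← ofReal_norm a, ← ofReal_norm b, ← ENNReal.ofReal_mul (norm_nonneg _)]
  exact ENNReal.ofReal_le_ofReal (norm_inner_le_norm _ _)

/-- The difference quotients of `u` in the direction `v` have `L^p` norm at most that of
`⟪V, v⟫`, and that norm is attained in the limit. -/
lemma diff_quot (N : ℕ) (p : ℝ) (hp : 1 < p) (u : Euc N → ℝ) (hum : Measurable u)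
    (V : Euc N → Euc N) (hVm : Measurable V) (hV : HasWeakGradient N u V)
    (hVp : ∫⁻ x, ‖V x‖ₑ ^ p ≠ ⊤) (v : Euc N) :
    (∀ t : ℝ, 0 < t → ∫⁻ x, ‖u (x + t • v) - u x‖ₑ ^ p ≤
      ENNReal.ofReal t ^ p * ∫⁻ x, ‖(⟪V x, v⟫ : ℝ)‖ₑ ^ p) ∧
    Tendsto (fun t : ℝ => (∫⁻ x, ‖u (x + t • v) - u x‖ₑ ^ p) * ENNReal.ofReal (t ^ (-p)))
      (𝓝[>] 0) (𝓝 (∫⁻ x, ‖(⟪V x, v⟫ : ℝ)‖ₑ ^ p)) := by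
  have hp0 : 0 < p := by linarith
  set f : Euc N → ℝ := fun x => ⟪V x, v⟫ with hf
  have hfm : Measurable f := by fun_prop
  have hfp : ∫⁻ x, ‖f x‖ₑ ^ p ≠ ⊤ := by
    have h1 : ∫⁻ x, ‖f x‖ₑ ^ p ≤ ∫⁻ x, ‖V x‖ₑ ^ p * ‖v‖ₑ ^ p := by
      refine lintegral_mono fun x => ?_
      rw [← ENNReal.mul_rpow_of_nonneg _ _ hp0.le]
      gcongr
      exact enorm_inner_le_mul _ _
    refine ne_top_of_le_ne_top ?_ h1
    rw [lintegral_mul_const' _ _ (ENNReal.rpow_ne_top_of_nonneg hp0.le enorm_ne_top)]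
    exact ENNReal.mul_ne_top hVp (ENNReal.rpow_ne_top_of_nonneg hp0.le enorm_ne_top)
  have hfL : MemLp f (ENNReal.ofReal p) volume := by
    refine ⟨hfm.aestronglyMeasurable, ?_⟩
    rw [lt_top_iff_ne_top]
    intro h
    apply hfp
    rw [← eLpNorm_rpow_eq N p hp, h, ENNReal.top_rpow_of_pos hp0]
  have hB : ∀ t : ℝ, 0 < t → ∫⁻ x, ‖u (x + t • v) - u x‖ₑ ^ p ≤
      ENNReal.ofReal t ^ p * ∫⁻ x, ‖f x‖ₑ ^ p := by
    intro t ht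
    have h1 : ∫⁻ x, ‖u (x + t • v) - u x‖ₑ ^ p = ∫⁻ x, ‖∫ τ in Ioc 0 t, f (x + τ • v)‖ₑ ^ p := by
      refine lintegral_congr_ae ?_
      filter_upwards [weak_ftc N u hum V hVm hV v t ht] with x hx
      rw [hx.2]
    rw [h1]
    refine lintegral_enorm_integral_rpow_le N p hp t ht (fun x τ => f (x + τ • v)) ?_ _ ?_
    · simp only [Function.uncurry_def]; fun_prop
    · intro τ _
      rw [lintegral_add_right_eq_self (fun x => ‖f x‖ₑ ^ p)]
  refine ⟨hB, ?_⟩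
  set q : ℝ → Euc N → ℝ := fun t x => t⁻¹ * (u (x + t • v) - u x) with hq
  have hqm : ∀ t, Measurable (q t) := fun t => by fun_prop
  have hinv : ∀ t : ℝ, 0 < t → ‖t⁻¹‖ₑ ^ p * ENNReal.ofReal t ^ p = 1 := by
    intro t ht
    rw [← ENNReal.mul_rpow_of_nonneg _ _ hp0.le, Real.enorm_eq_ofReal (by positivity),
      ← ENNReal.ofReal_mul (by positivity), inv_mul_cancel₀ ht.ne']
    simp
  have hqn : ∀ t : ℝ, 0 < t → eLpNorm (q t) (ENNReal.ofReal p) volume ^ p =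
      ‖t⁻¹‖ₑ ^ p * ∫⁻ x, ‖u (x + t • v) - u x‖ₑ ^ p := by
    intro t ht
    rw [eLpNorm_rpow_eq N p hp, ← lintegral_const_mul' _ _
      (ENNReal.rpow_ne_top_of_nonneg hp0.le enorm_ne_top)]
    refine lintegral_congr fun x => ?_
    rw [hq, enorm_mul, ENNReal.mul_rpow_of_nonneg _ _ hp0.le]
  have hup : ∀ t : ℝ, 0 < t → eLpNorm (q t) (ENNReal.ofReal p) volume ≤
      eLpNorm f (ENNReal.ofReal p) volume := by
    intro t ht
    rw [← ENNReal.rpow_le_rpow_iff hp0, hqn t ht, eLpNorm_rpow_eq N p hp]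
    calc _ ≤ ‖t⁻¹‖ₑ ^ p * (ENNReal.ofReal t ^ p * ∫⁻ x, ‖f x‖ₑ ^ p) := by
          gcongr 1
          exact hB t ht
      _ = _ := by rw [← mul_assoc, hinv t ht, one_mul]
  have herr : Tendsto (fun t => eLpNorm (f - q t) (ENNReal.ofReal p) volume) (𝓝[>] 0) (𝓝 0) := by
    rw [ENNReal.tendsto_nhds_zero]
    intro ε hε
    have htr := (ENNReal.tendsto_nhds_zero.1 (tendsto_translate N p hp f hfL v)) ε hε
    obtain ⟨δ, hδ, hball⟩ := Metric.eventually_nhds_iff.1 htr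
    filter_upwards [Ioo_mem_nhdsGT hδ] with t ht
    rw [← ENNReal.rpow_le_rpow_iff hp0, eLpNorm_rpow_eq N p hp]
    have h1 : ∫⁻ x, ‖(f - q t) x‖ₑ ^ p = ‖t⁻¹‖ₑ ^ p *
        ∫⁻ x, ‖∫ τ in Ioc 0 t, (f (x + τ • v) - f x)‖ₑ ^ p := by
      rw [← lintegral_const_mul' _ _ (ENNReal.rpow_ne_top_of_nonneg hp0.le enorm_ne_top)]
      refine lintegral_congr_ae ?_
      filter_upwards [weak_ftc N u hum V hVm hV v t ht.1] with x hx
      rw [← ENNReal.mul_rpow_of_nonneg _ _ hp0.le, ← enorm_mul,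
        integral_sub hx.1 (integrable_const _), ← hx.2, ← enorm_neg]
      congr 2
      have := ht.1.ne'
      simp [hq, ht.1.le]
      field_simp
    rw [h1]
    calc _ ≤ ‖t⁻¹‖ₑ ^ p * (ENNReal.ofReal t ^ p * ε ^ p) := by
          gcongr 1
          refine lintegral_enorm_integral_rpow_le N p hp t ht.1
            (fun x τ => f (x + τ • v) - f x) ?_ _ ?_
          · simp only [Function.uncurry_def]; fun_prop
          · intro τ hτ
            rw [← eLpNorm_rpow_eq N p hp (fun x => f (x + τ • v) - f x)]
            gcongr
            apply hball
            rw [Real.dist_eq, sub_zero, abs_of_pos hτ.1]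
            exact hτ.2.trans_lt ht.2
      _ = _ := by rw [← mul_assoc, hinv t ht.1, one_mul]
  have hlim : Tendsto (fun t => eLpNorm (q t) (ENNReal.ofReal p) volume) (𝓝[>] 0)
      (𝓝 (eLpNorm f (ENNReal.ofReal p) volume)) := by
    have hlow : Tendsto (fun t => eLpNorm f (ENNReal.ofReal p) volume -
        eLpNorm (f - q t) (ENNReal.ofReal p) volume) (𝓝[>] 0)
        (𝓝 (eLpNorm f (ENNReal.ofReal p) volume)) := by
      have := ENNReal.Tendsto.sub (tendsto_const_nhds
        (x := eLpNorm f (ENNReal.ofReal p) volume)) herr (Or.inr ENNReal.zero_ne_top)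
      simpa using this
    refine tendsto_of_tendsto_of_tendsto_of_le_of_le' hlow tendsto_const_nhds ?_ ?_
    · refine Filter.Eventually.of_forall fun t => ?_
      rw [tsub_le_iff_right]
      have := eLpNorm_add_le (hqm t).aestronglyMeasurable
        ((hfm.sub (hqm t)).aestronglyMeasurable (μ := volume))
        (show 1 ≤ ENNReal.ofReal p by rw [ENNReal.one_le_ofReal]; exact hp.le)
      simpa using this
    · filter_upwards [self_mem_nhdsWithin] with t ht
      exact hup t ht
  have hpow := (ENNReal.continuous_rpow_const (y := p)).tendsto _ |>.comp hlim
  rw [eLpNorm_rpow_eq N p hp] at hpow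
  refine hpow.congr' ?_
  filter_upwards [self_mem_nhdsWithin] with t ht
  have ht0 : (0:ℝ) < t := ht
  simp only [Function.comp]
  rw [hqn t ht, mul_comm, Real.enorm_eq_ofReal (by positivity),
    ENNReal.ofReal_rpow_of_nonneg (by positivity) hp0.le, Real.inv_rpow ht0.le,
    Real.rpow_neg ht0.le]

/-! ### The rescaled energy -/

/-- The double integral in polar coordinates around the diagonal. -/
lemma energy_eq (N : ℕ) (hN : 1 ≤ N) (p s : ℝ) (hp : 1 < p) (u : Euc N → ℝ) (hum : Measurable u) :
    ∫⁻ x, ∫⁻ y, ENNReal.ofReal (|u x - u y| ^ p / ‖x - y‖ ^ ((N : ℝ) + s * p)) =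
      ∫⁻ r in Ioi (0:ℝ), ((∫⁻ w : sphere (0 : Euc N) 1,
        (∫⁻ x, ‖u (x + r • (w : Euc N)) - u x‖ₑ ^ p) ∂((volume : Measure (Euc N)).toSphere)) *
          ENNReal.ofReal (r ^ (-p))) * ENNReal.ofReal (r ^ (p * (1 - s) - 1)) := by
  have hp0 : 0 < p := by linarith
  have hDm : Measurable (fun h : Euc N => ∫⁻ x, ‖u (x + h) - u x‖ₑ ^ p) := by
    apply Measurable.lintegral_prod_right
    fun_prop
  have h1 : ∀ x, ∫⁻ y, ENNReal.ofReal (|u x - u y| ^ p / ‖x - y‖ ^ ((N : ℝ) + s * p)) =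
      ∫⁻ h, ‖u (x + h) - u x‖ₑ ^ p * ENNReal.ofReal ((‖h‖ ^ ((N : ℝ) + s * p))⁻¹) := by
    intro x
    rw [← lintegral_add_left_eq_self _ x]
    refine lintegral_congr fun h => ?_
    rw [div_eq_mul_inv, ENNReal.ofReal_mul (by positivity),
      ← ENNReal.ofReal_rpow_of_nonneg (abs_nonneg _) hp0.le, ← Real.enorm_eq_ofReal_abs,
      ← enorm_neg (u x - u (x + h))]
    simp
  have hGm : Measurable (fun h : Euc N => ENNReal.ofReal ((‖h‖ ^ ((N : ℝ) + s * p))⁻¹)) := by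
    fun_prop
  simp_rw [h1]
  rw [lintegral_lintegral_swap (by
    refine Measurable.aemeasurable ?_
    simp only [Function.uncurry_def]
    fun_prop)]
  have h2 : ∀ h : Euc N, ∫⁻ x, ‖u (x + h) - u x‖ₑ ^ p *
      ENNReal.ofReal ((‖h‖ ^ ((N : ℝ) + s * p))⁻¹) =
      (∫⁻ x, ‖u (x + h) - u x‖ₑ ^ p) * ENNReal.ofReal ((‖h‖ ^ ((N : ℝ) + s * p))⁻¹) := fun h =>
    lintegral_mul_const' _ _ ENNReal.ofReal_ne_top
  simp_rw [h2]
  rw [lintegral_polar N hN (fun h : Euc N => (∫⁻ x, ‖u (x + h) - u x‖ₑ ^ p) *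
    ENNReal.ofReal ((‖h‖ ^ ((N : ℝ) + s * p))⁻¹)) (hDm.mul hGm)]
  have hDm2 : Measurable (fun q : sphere (0 : Euc N) 1 × ℝ =>
      ∫⁻ x, ‖u (x + q.2 • (q.1 : Euc N)) - u x‖ₑ ^ p) :=
    hDm.comp (g := fun h : Euc N => ∫⁻ x, ‖u (x + h) - u x‖ₑ ^ p)
      (f := fun q : sphere (0 : Euc N) 1 × ℝ => q.2 • (q.1 : Euc N)) (by fun_prop)
  rw [lintegral_lintegral_swap (by
    refine Measurable.aemeasurable ?_
    simp only [Function.uncurry_def]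
    refine (hDm2.mul ?_).mul ?_ <;> fun_prop)]
  refine setLIntegral_congr_fun measurableSet_Ioi fun r hr => ?_
  have hr0 : 0 < r := hr
  rw [mul_assoc, ← ENNReal.ofReal_mul (by positivity), ← lintegral_mul_const' _ _
    ENNReal.ofReal_ne_top]
  refine lintegral_congr fun w => ?_
  rw [mul_assoc, ← ENNReal.ofReal_mul (by positivity)]
  congr 2
  rw [norm_smul, Real.norm_of_nonneg hr0.le, norm_eq_of_mem_sphere, mul_one,
    ← Real.rpow_natCast, ← Real.rpow_neg hr0.le, ← Real.rpow_add hr0, ← Real.rpow_add hr0,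
    Nat.cast_sub hN]
  congr 1
  push_cast
  ring

/-- The theorem for a Borel measurable weak gradient, with extended norms. With
`g r = r ^ (-p) ∫_S ‖u(· + r w) - u‖_p ^ p dσ(w)` and `a = p (1 - s)`, the rescaled energy is
`(1 / p) a ∫ g(r) r ^ (a - 1) dr`, and `g r → K ‖V‖_p ^ p` as `r → 0⁺`. -/
lemma bbm_core (N : ℕ) (hN : 1 ≤ N) (p : ℝ) (hp : 1 < p)
    (u : Euc N → ℝ) (hum : Measurable u) (hup : ∫⁻ x, ‖u x‖ₑ ^ p ≠ ⊤)
    (V : Euc N → Euc N) (hVm : Measurable V) (hV : HasWeakGradient N u V)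
    (hVp : ∫⁻ x, ‖V x‖ₑ ^ p ≠ ⊤) (e : Euc N) (he : ‖e‖ = 1) :
    Tendsto (fun s : ℝ => ENNReal.ofReal (1 - s) *
        ∫⁻ x, ∫⁻ y, ENNReal.ofReal (|u x - u y| ^ p / ‖x - y‖ ^ ((N : ℝ) + s * p)))
      (𝓝[<] (1:ℝ))
      (𝓝 (ENNReal.ofReal (sphereK N p e / p) * ∫⁻ x, ‖V x‖ₑ ^ p)) := by
  have hp0 : 0 < p := by linarith
  set σ := (volume : Measure (Euc N)).toSphere with hσ
  set E := ∫⁻ x, ‖V x‖ₑ ^ p with hE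
  set D : Euc N → ℝ≥0∞ := fun h => ∫⁻ x, ‖u (x + h) - u x‖ₑ ^ p with hD
  have hDm : Measurable D := by
    apply Measurable.lintegral_prod_right
    fun_prop
  have hDm2 : Measurable (fun q : ℝ × sphere (0 : Euc N) 1 => D (q.1 • (q.2 : Euc N))) :=
    hDm.comp (by fun_prop)
  set M := (2 * eLpNorm u (ENNReal.ofReal p) volume) ^ p with hM
  have hMt : M ≠ ⊤ := by
    rw [hM, ENNReal.mul_rpow_of_nonneg _ _ hp0.le, eLpNorm_rpow_eq N p hp]
    exact ENNReal.mul_ne_top (ENNReal.rpow_ne_top_of_nonneg hp0.le (by norm_num)) hup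
  have hDM : ∀ h, D h ≤ M := by
    intro h
    have hmp := measurePreserving_add_right (volume : Measure (Euc N)) h
    simp only [hD, hM]
    rw [← eLpNorm_rpow_eq N p hp (fun x => u (x + h) - u x)]
    gcongr
    calc eLpNorm (fun x => u (x + h) - u x) (ENNReal.ofReal p) volume
        ≤ eLpNorm (fun x => u (x + h)) (ENNReal.ofReal p) volume +
          eLpNorm u (ENNReal.ofReal p) volume := by
          refine eLpNorm_sub_le (hum.comp (measurable_add_const h)).aestronglyMeasurable
            hum.aestronglyMeasurable ?_
          rw [ENNReal.one_le_ofReal]; exact hp.le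
      _ = 2 * eLpNorm u (ENNReal.ofReal p) volume := by
          rw [two_mul]
          congr 1
          exact eLpNorm_comp_measurePreserving hum.aestronglyMeasurable hmp
  have hQE : ∀ w : sphere (0 : Euc N) 1, ∫⁻ x, ‖(⟪V x, (w : Euc N)⟫ : ℝ)‖ₑ ^ p ≤ E := by
    intro w
    refine lintegral_mono fun x => ?_
    gcongr
    refine (enorm_inner_le_mul _ _).trans ?_
    rw [← ofReal_norm (w : Euc N), norm_eq_of_mem_sphere]
    simp
  have hDE : ∀ r : ℝ, 0 < r → ∀ w : sphere (0 : Euc N) 1,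
      D (r • (w : Euc N)) * ENNReal.ofReal (r ^ (-p)) ≤ E := by
    intro r hr w
    have h1 := (diff_quot N p hp u hum V hVm hV hVp (w : Euc N)).1 r hr
    calc D (r • (w : Euc N)) * ENNReal.ofReal (r ^ (-p))
        ≤ (ENNReal.ofReal r ^ p * E) * ENNReal.ofReal (r ^ (-p)) := by
          gcongr
          exact h1.trans (by gcongr; exact hQE w)
      _ = (ENNReal.ofReal (r ^ p) * ENNReal.ofReal (r ^ (-p))) * E := by
          rw [ENNReal.ofReal_rpow_of_nonneg hr.le hp0.le]; ring
      _ = E := by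
          rw [← ENNReal.ofReal_mul (by positivity), ← Real.rpow_add hr]; simp
  set g : ℝ → ℝ≥0∞ := fun r => (∫⁻ w : sphere (0 : Euc N) 1, D (r • (w : Euc N)) ∂σ) *
    ENNReal.ofReal (r ^ (-p)) with hg
  have hg' : ∀ r, g r = ∫⁻ w : sphere (0 : Euc N) 1,
      D (r • (w : Euc N)) * ENNReal.ofReal (r ^ (-p)) ∂σ := fun r =>
    (lintegral_mul_const' _ _ ENNReal.ofReal_ne_top).symm
  have hgm : Measurable g := by
    refine Measurable.mul ?_ (by fun_prop)
    exact Measurable.lintegral_prod_right hDm2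
  have hlim : Tendsto g (𝓝[>] 0) (𝓝 (E * ENNReal.ofReal (sphereK N p e))) := by
    have hL : E * ENNReal.ofReal (sphereK N p e) =
        ∫⁻ w : sphere (0 : Euc N) 1, (∫⁻ x, ‖(⟪V x, (w : Euc N)⟫ : ℝ)‖ₑ ^ p) ∂σ := by
      rw [lintegral_lintegral_swap (by
        refine Measurable.aemeasurable ?_
        simp only [Function.uncurry_def]
        fun_prop), hE, ← lintegral_mul_const' _ _ ENNReal.ofReal_ne_top]
      exact lintegral_congr fun x => (lintegral_sphere_inner N hN p hp e (V x) he).symm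
    rw [hL]
    simp_rw [funext hg']
    refine tendsto_lintegral_filter_of_dominated_convergence (fun _ => E) ?_ ?_ ?_ ?_
    · refine Filter.Eventually.of_forall fun r => ?_
      exact (hDm2.comp measurable_prodMk_left).mul_const _
    · filter_upwards [self_mem_nhdsWithin] with r hr
      exact ae_of_all _ (hDE r hr)
    · rw [lintegral_const]
      exact ENNReal.mul_ne_top hVp (measure_ne_top _ _)
    · exact ae_of_all _ fun w => (diff_quot N p hp u hum V hVm hV hVp (w : Euc N)).2
  have hrad := tendsto_radial p hp g hgm (E * σ univ + M * σ univ)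
    (E * ENNReal.ofReal (sphereK N p e))
    (ENNReal.add_ne_top.2 ⟨ENNReal.mul_ne_top hVp (measure_ne_top _ _),
      ENNReal.mul_ne_top hMt (measure_ne_top _ _)⟩)
    (fun r hr => by
      refine le_trans ?_ (le_add_right le_rfl)
      rw [hg', ← lintegral_const]
      exact lintegral_mono (hDE r hr))
    (fun r hr => by
      simp only [hg]
      gcongr
      refine le_trans ?_ (le_add_left le_rfl)
      rw [← lintegral_const]
      exact lintegral_mono fun w => hDM _) hlim
  have hs : Tendsto (fun s : ℝ => p * (1 - s)) (𝓝[<] 1) (𝓝[>] 0) := by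
    rw [tendsto_nhdsWithin_iff]
    constructor
    · have : Continuous (fun s : ℝ => p * (1 - s)) := by fun_prop
      have h := this.tendsto 1
      simp only [sub_self, mul_zero] at h
      exact h.mono_left nhdsWithin_le_nhds
    · filter_upwards [self_mem_nhdsWithin] with s hs
      have : s < 1 := hs
      exact mul_pos hp0 (by linarith)
  have hfin := ENNReal.Tendsto.const_mul (a := ENNReal.ofReal (1 / p)) (hrad.comp hs)
    (Or.inr ENNReal.ofReal_ne_top)
  have hLeq : ENNReal.ofReal (1 / p) * (E * ENNReal.ofReal (sphereK N p e)) =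
      ENNReal.ofReal (sphereK N p e / p) * E := by
    rw [div_eq_inv_mul (sphereK N p e), ENNReal.ofReal_mul (by positivity), one_div]; ring
  rw [hLeq] at hfin
  refine hfin.congr fun s => ?_
  simp only [Function.comp]
  rw [energy_eq N hN p s hp u hum, ← mul_assoc, ← ENNReal.ofReal_mul (by positivity)]
  congr 2
  field_simp

/-- **Bourgain–Brezis–Mironescu** (Theorem 1.1): for `u ∈ W^{1,p}(ℝ^N)`,
`lim_{s→1⁻} (1-s) ∬ |u(x)-u(y)|^p/|x-y|^{N+sp} = (K_{N,p}/p) ∫ |∇u|^p`. -/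
theorem bourgain_brezis_mironescu
    (N : ℕ) (hN : 1 ≤ N) (p : ℝ) (hp : 1 < p)
    (u : Euc N → ℝ) (hum : Measurable u)
    (hup : (∫⁻ x, ENNReal.ofReal (|u x| ^ p)) < ⊤)
    (V : Euc N → Euc N) (hV : HasWeakGradient N u V)
    (hVp : (∫⁻ x, ENNReal.ofReal (‖V x‖ ^ p)) < ⊤)
    (e : Euc N) (he : ‖e‖ = 1) :
    Tendsto (fun s : ℝ => ENNReal.ofReal (1 - s) *
        ∫⁻ x, ∫⁻ y, ENNReal.ofReal (|u x - u y| ^ p / ‖x - y‖ ^ ((N : ℝ) + s * p)))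
      (𝓝[<] (1:ℝ))
      (𝓝 (ENNReal.ofReal (sphereK N p e / p) * ∫⁻ x, ENNReal.ofReal (‖V x‖ ^ p))) := by
  have hp0 : 0 < p := by linarith
  obtain ⟨hu, hVl, hw⟩ := hV
  -- A Borel measurable representative of the weak gradient.
  have hVs : AEStronglyMeasurable V volume := hVl.aestronglyMeasurable
  set V' := hVs.mk V with hV'
  have hVV : V =ᵐ[volume] V' := hVs.ae_eq_mk
  have hwg : HasWeakGradient N u V' := by
    refine ⟨hu, ?_, fun φ hφ hs i => ?_⟩
    · intro x
      obtain ⟨s, hs, hi⟩ := hVl x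
      exact ⟨s, hs, hi.congr_fun_ae (ae_restrict_of_ae hVV)⟩
    · rw [hw φ hφ hs i]
      congr 1
      refine integral_congr_ae ?_
      filter_upwards [hVV] with x hx
      rw [hx]
  have hE : ∫⁻ x, ENNReal.ofReal (‖V x‖ ^ p) = ∫⁻ x, ‖V' x‖ₑ ^ p := by
    refine lintegral_congr_ae ?_
    filter_upwards [hVV] with x hx
    rw [← hx, ← ENNReal.ofReal_rpow_of_nonneg (norm_nonneg _) hp0.le, ofReal_norm]
  have hU : ∫⁻ x, ENNReal.ofReal (|u x| ^ p) = ∫⁻ x, ‖u x‖ₑ ^ p := by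
    refine lintegral_congr fun x => ?_
    rw [← ENNReal.ofReal_rpow_of_nonneg (abs_nonneg _) hp0.le, Real.enorm_eq_ofReal_abs]
  rw [hE] at hVp ⊢
  rw [hU] at hup
  exact bbm_core N hN p hp u hum hup.ne V' hVs.stronglyMeasurable_mk.measurable hwg hVp.ne e he
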